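/- There exists an absolute constant c > 0 with the following property. Let m, T, L, N be positive integers, let g : {1,…,L} → {1,…,T} be an assignment of independently parameterized gates to layers, let M_1,…,M_T be positive integers such that for each t the number of layers s with g(s) = t is at most M_t, let V_0, V_1, …, V_L be fixed unitaries in U(4m), and define the gate-sharing circuit map F : U(4)^T → U(4m) by F(U_1,…,U_T) = V_L (U_{g(L)} ⊗ I_m) V_{L−1} ⋯ V_1 (U_{g(1)} ⊗ I_m) V_0. Let Z be a measurable space with probability measure μ, ρ : Z → ℂ^{4m×4m} measurable with density-matrix values, C > 0, and O : Z → ℂ^{4m×4m} measurable with Hermitian values satisfying ‖O_z‖ ≤ C. Define ℓ(θ; z) = Re Tr(O_z · F(θ) · ρ(z) · F(θ)*), R(θ) = ∫ ℓ(θ; z) dμ(z), and R̂_S(θ) = (1/N) Σ_{i=1}^N ℓ(θ; z_i) for S ∈ Z^N. Then for every δ ∈ (0,1), with probability at least 1 − δ over S ~ μ^{⊗N}, simultaneously for every θ ∈ U(4)^T: R(θ) − R̂_S(θ) ≤ c · C · ( √(T(1 + log T)/N) + √((Σ_{t=1}^T log M_t)/N) + √(log(2/δ)/N) ). -/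

import Mathlib

open MeasureTheory Matrix
open scoped Kronecker ComplexOrder

/-- The ℓ²→ℓ² operator norm (spectral norm) of a complex square matrix. -/
noncomputable def opNorm {n : Type*} [Fintype n] [DecidableEq n] (A : Matrix n n ℂ) : ℝ :=
  ‖Matrix.toEuclideanCLM (𝕜 := ℂ) A‖

/-- The variational unitary circuit: `circuit V U L = V L * (U (L-1) ⊗ I) * ⋯ * (U 0 ⊗ I) * V 0`,
i.e. `L` layers of 2-qubit gates interleaved with fixed global unitaries on `ℂ^{4m}`. -/
noncomputable def circuit {m : ℕ} (V : ℕ → Matrix (Fin 4 × Fin m) (Fin 4 × Fin m) ℂ)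
    (U : ℕ → Matrix (Fin 4) (Fin 4) ℂ) : ℕ → Matrix (Fin 4 × Fin m) (Fin 4 × Fin m) ℂ
  | 0 => V 0
  | (t + 1) => V (t + 1) * (U t ⊗ₖ (1 : Matrix (Fin m) (Fin m) ℂ)) * circuit V U t

/-- The loss `ℓ(θ; z) = Re Tr(O_z · F(θ) · ρ(z) · F(θ)*)`. -/
noncomputable def qloss {m : ℕ} {Z : Type*}
    (V : ℕ → Matrix (Fin 4 × Fin m) (Fin 4 × Fin m) ℂ) (L : ℕ)
    (O ρ : Z → Matrix (Fin 4 × Fin m) (Fin 4 × Fin m) ℂ)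
    (U : ℕ → Matrix (Fin 4) (Fin 4) ℂ) (z : Z) : ℝ :=
  ((O z * circuit V U L * ρ z * (circuit V U L)ᴴ).trace).re

section MatrixNorms

open scoped Matrix.Norms.L2Operator MatrixOrder

variable {n : Type*} [Fintype n] [DecidableEq n]

theorem norm_le_one_of_mem_unitaryGroup {U : Matrix n n ℂ} (hU : U ∈ Matrix.unitaryGroup n ℂ) :
    ‖U‖ ≤ 1 := by
  rcases subsingleton_or_nontrivial (Matrix n n ℂ) with h | h
  · simp [Subsingleton.elim U 0]
  · exact (CStarRing.norm_of_mem_unitary hU).le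

theorem norm_single_one_le (i j : n) : ‖(Matrix.single i j 1 : Matrix n n ℂ)‖ ≤ 1 := by
  have h := Matrix.l2_opNorm_conjTranspose_mul_self (Matrix.single i j 1 : Matrix n n ℂ)
  have h1 : ‖Pi.single (M := fun _ : n => ℂ) j 1‖ ≤ 1 := by
    refine (pi_norm_le_iff_of_nonneg zero_le_one).mpr fun k => ?_
    by_cases hk : k = j
    · subst hk; simp
    · simp [hk]
  rw [Matrix.conjTranspose_single, Matrix.single_mul_single_same, star_one, one_mul,
    ← Matrix.diagonal_single, Matrix.l2_opNorm_diagonal] at h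
  nlinarith [norm_nonneg (Matrix.single i j 1 : Matrix n n ℂ)]

theorem norm_le_sum_norm_entries (A : Matrix n n ℂ) : ‖A‖ ≤ ∑ i, ∑ j, ‖A i j‖ := by
  conv_lhs => rw [Matrix.matrix_eq_sum_single A]
  refine (norm_sum_le _ _).trans (Finset.sum_le_sum fun i _ => ?_)
  refine (norm_sum_le _ _).trans (Finset.sum_le_sum fun j _ => ?_)
  have : Matrix.single i j (A i j) = A i j • Matrix.single i j (1 : ℂ) := by
    simp [Matrix.smul_single]
  rw [this, norm_smul]
  exact mul_le_of_le_one_right (norm_nonneg _) (norm_single_one_le i j)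

/-- Ampliation `A ↦ A ⊗ I`, as a star algebra homomorphism. -/
noncomputable def kroneckerOneHom (n p : Type*) [Fintype n] [DecidableEq n] [Fintype p]
    [DecidableEq p] : Matrix n n ℂ →⋆ₙₐ[ℂ] Matrix (n × p) (n × p) ℂ where
  toFun A := A ⊗ₖ (1 : Matrix p p ℂ)
  map_smul' c A := by simp [Matrix.smul_kronecker]
  map_zero' := by simp
  map_add' A B := by simp [Matrix.add_kronecker]
  map_mul' A B := by simp [← Matrix.mul_kronecker_mul]
  map_star' A := by simp [Matrix.star_eq_conjTranspose, Matrix.conjTranspose_kronecker]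

theorem norm_kronecker_one_le {p : Type*} [Fintype p] [DecidableEq p] (A : Matrix n n ℂ) :
    ‖A ⊗ₖ (1 : Matrix p p ℂ)‖ ≤ ‖A‖ :=
  NonUnitalStarAlgHom.norm_apply_le (kroneckerOneHom n p) A

/-- Hölder's inequality for the trace pairing with a positive semidefinite matrix. -/
theorem norm_trace_mul_le_of_posSemidef (A : Matrix n n ℂ) {ρ : Matrix n n ℂ}
    (hρ : ρ.PosSemidef) : ‖(A * ρ).trace‖ ≤ ‖A‖ * ρ.trace.re := by
  obtain ⟨B, rfl⟩ : ∃ B : Matrix n n ℂ, ρ = B * Bᴴ := by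
    obtain ⟨B, hB⟩ := CStarAlgebra.nonneg_iff_eq_mul_star_self.mp hρ.nonneg
    exact ⟨B, hB⟩
  have key (x : n → ℂ) : ‖star x ⬝ᵥ (A *ᵥ x)‖ ≤ ‖A‖ * (star x ⬝ᵥ x).re := by
    have h1 : star x ⬝ᵥ (A *ᵥ x) =
        inner ℂ (WithLp.toLp 2 x) (Matrix.toEuclideanCLM (𝕜 := ℂ) A (WithLp.toLp 2 x)) := by
      rw [Matrix.toEuclideanCLM_toLp, EuclideanSpace.inner_toLp_toLp, dotProduct_comm]
    have h2 : (star x ⬝ᵥ x).re = ‖WithLp.toLp 2 x‖ ^ 2 := by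
      rw [dotProduct_comm, ← EuclideanSpace.inner_toLp_toLp]
      exact inner_self_eq_norm_sq (𝕜 := ℂ) _
    rw [h1, h2]
    refine (norm_inner_le_norm _ _).trans ?_
    have h3 := (Matrix.toEuclideanCLM (𝕜 := ℂ) A).le_opNorm (WithLp.toLp 2 x)
    rw [Matrix.l2_opNorm_toEuclideanCLM] at h3
    nlinarith [norm_nonneg (WithLp.toLp 2 x)]
  have h1 : (A * (B * Bᴴ)).trace = ∑ i, star (fun k => B k i) ⬝ᵥ (A *ᵥ fun k => B k i) := by
    rw [← Matrix.mul_assoc, Matrix.trace_mul_comm]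
    simp only [Matrix.trace, Matrix.diag, Matrix.mul_apply, dotProduct, Matrix.mulVec,
      Matrix.conjTranspose_apply, Pi.star_apply]
  have h2 : (B * Bᴴ).trace = ∑ i, star (fun k => B k i) ⬝ᵥ (fun k => B k i) := by
    rw [Matrix.trace_mul_comm]
    simp only [Matrix.trace, Matrix.diag, Matrix.mul_apply, dotProduct,
      Matrix.conjTranspose_apply, Pi.star_apply]
  rw [h1, h2, Complex.re_sum, Finset.mul_sum]
  exact (norm_sum_le _ _).trans (Finset.sum_le_sum fun i _ => key _)

end MatrixNorms

section CircuitBounds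

open scoped Matrix.Norms.L2Operator

variable {m : ℕ} {V : ℕ → Matrix (Fin 4 × Fin m) (Fin 4 × Fin m) ℂ} {L : ℕ}

theorem norm_layer_le {A : Matrix (Fin 4 × Fin m) (Fin 4 × Fin m) ℂ}
    (hA : A ∈ Matrix.unitaryGroup (Fin 4 × Fin m) ℂ) (B : Matrix (Fin 4) (Fin 4) ℂ)
    (D : Matrix (Fin 4 × Fin m) (Fin 4 × Fin m) ℂ) :
    ‖A * (B ⊗ₖ (1 : Matrix (Fin m) (Fin m) ℂ)) * D‖ ≤ ‖B‖ * ‖D‖ := by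
  refine (norm_mul_le _ _).trans (mul_le_mul_of_nonneg_right ?_ (norm_nonneg _))
  refine (norm_mul_le _ _).trans ?_
  have h1 := norm_le_one_of_mem_unitaryGroup hA
  have h2 := norm_kronecker_one_le (p := Fin m) B
  nlinarith [norm_nonneg (B ⊗ₖ (1 : Matrix (Fin m) (Fin m) ℂ)), norm_nonneg A]

theorem norm_circuit_le_one (hV : ∀ s ≤ L, V s ∈ Matrix.unitaryGroup (Fin 4 × Fin m) ℂ)
    {U : ℕ → Matrix (Fin 4) (Fin 4) ℂ}
    (hU : ∀ s < L, U s ∈ Matrix.unitaryGroup (Fin 4) ℂ) : ‖circuit V U L‖ ≤ 1 := by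
  induction L with
  | zero => exact norm_le_one_of_mem_unitaryGroup (hV 0 le_rfl)
  | succ L ih =>
    refine (norm_layer_le (hV _ le_rfl) _ _).trans ?_
    exact mul_le_one₀ (norm_le_one_of_mem_unitaryGroup (hU L (by lia))) (norm_nonneg _)
      (ih (fun s hs => hV s (by lia)) fun s hs => hU s (by lia))

theorem norm_circuit_sub_le (hV : ∀ s ≤ L, V s ∈ Matrix.unitaryGroup (Fin 4 × Fin m) ℂ)
    {U U' : ℕ → Matrix (Fin 4) (Fin 4) ℂ}
    (hU : ∀ s < L, U s ∈ Matrix.unitaryGroup (Fin 4) ℂ)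
    (hU' : ∀ s < L, U' s ∈ Matrix.unitaryGroup (Fin 4) ℂ) :
    ‖circuit V U L - circuit V U' L‖ ≤ ∑ s ∈ Finset.range L, ‖U s - U' s‖ := by
  induction L with
  | zero => simp [circuit]
  | succ L ih =>
    have hVL : ∀ s ≤ L, V s ∈ Matrix.unitaryGroup (Fin 4 × Fin m) ℂ := fun s hs => hV s (by lia)
    have h1 := ih hVL (fun s hs => hU s (by lia)) fun s hs => hU' s (by lia)
    have h2 := norm_circuit_le_one hVL fun s hs => hU s (by lia)
    have h3 := norm_le_one_of_mem_unitaryGroup (hU' L (by lia))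
    have hsplit : circuit V U (L + 1) - circuit V U' (L + 1) =
        V (L + 1) * ((U L - U' L) ⊗ₖ (1 : Matrix (Fin m) (Fin m) ℂ)) * circuit V U L +
          V (L + 1) * (U' L ⊗ₖ (1 : Matrix (Fin m) (Fin m) ℂ)) *
            (circuit V U L - circuit V U' L) := by
      have hsub : (U L - U' L) ⊗ₖ (1 : Matrix (Fin m) (Fin m) ℂ) =
          U L ⊗ₖ (1 : Matrix (Fin m) (Fin m) ℂ) - U' L ⊗ₖ (1 : Matrix (Fin m) (Fin m) ℂ) :=
        map_sub (kroneckerOneHom (Fin 4) (Fin m)) (U L) (U' L)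
      rw [hsub]
      simp only [circuit]
      noncomm_ring
    rw [hsplit, Finset.sum_range_succ]
    refine (norm_add_le _ _).trans ?_
    have h4 := norm_layer_le (hV _ le_rfl) (U L - U' L) (circuit V U L)
    have h5 := norm_layer_le (hV _ le_rfl) (U' L) (circuit V U L - circuit V U' L)
    nlinarith [norm_nonneg (U L - U' L), norm_nonneg (circuit V U L - circuit V U' L)]

theorem abs_re_trace_sandwich_le {n : Type*} [Fintype n] [DecidableEq n] {C : ℝ}
    {O ρ A B : Matrix n n ℂ} (hO : opNorm O ≤ C) (hρ : ρ.PosSemidef) (hρ1 : ρ.trace = 1) :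
    |((O * A * ρ * Bᴴ).trace).re| ≤ C * (‖A‖ * ‖B‖) := by
  refine (Complex.abs_re_le_norm _).trans ?_
  rw [Matrix.trace_mul_comm, ← Matrix.mul_assoc]
  refine (norm_trace_mul_le_of_posSemidef _ hρ).trans ?_
  rw [hρ1, Complex.one_re, mul_one]
  have hO' : ‖O‖ ≤ C := hO
  calc ‖Bᴴ * (O * A)‖ ≤ ‖Bᴴ‖ * (‖O‖ * ‖A‖) :=
        (norm_mul_le _ _).trans (mul_le_mul_of_nonneg_left (norm_mul_le _ _) (norm_nonneg _))
    _ = ‖O‖ * (‖A‖ * ‖B‖) := by rw [Matrix.l2_opNorm_conjTranspose]; ring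
    _ ≤ C * (‖A‖ * ‖B‖) := by gcongr

variable {Z : Type*} {O ρ : Z → Matrix (Fin 4 × Fin m) (Fin 4 × Fin m) ℂ} {C : ℝ}

theorem abs_qloss_le (hV : ∀ s ≤ L, V s ∈ Matrix.unitaryGroup (Fin 4 × Fin m) ℂ)
    {U : ℕ → Matrix (Fin 4) (Fin 4) ℂ}
    (hU : ∀ s < L, U s ∈ Matrix.unitaryGroup (Fin 4) ℂ) (hC : 0 ≤ C) {z : Z}
    (hO : opNorm (O z) ≤ C) (hρ : (ρ z).PosSemidef ∧ (ρ z).trace = 1) :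
    |qloss V L O ρ U z| ≤ C := by
  refine (abs_re_trace_sandwich_le hO hρ.1 hρ.2).trans ?_
  have h := norm_circuit_le_one hV hU
  exact mul_le_of_le_one_right hC (mul_le_one₀ h (norm_nonneg _) h)

theorem abs_qloss_sub_le (hV : ∀ s ≤ L, V s ∈ Matrix.unitaryGroup (Fin 4 × Fin m) ℂ)
    {U U' : ℕ → Matrix (Fin 4) (Fin 4) ℂ}
    (hU : ∀ s < L, U s ∈ Matrix.unitaryGroup (Fin 4) ℂ)
    (hU' : ∀ s < L, U' s ∈ Matrix.unitaryGroup (Fin 4) ℂ) (hC : 0 ≤ C) {z : Z}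
    (hO : opNorm (O z) ≤ C) (hρ : (ρ z).PosSemidef ∧ (ρ z).trace = 1) :
    |qloss V L O ρ U z - qloss V L O ρ U' z| ≤
      2 * C * ∑ s ∈ Finset.range L, ‖U s - U' s‖ := by
  set F := circuit V U L with hF
  set F' := circuit V U' L with hF'
  have hsplit : qloss V L O ρ U z - qloss V L O ρ U' z =
      ((O z * (F - F') * ρ z * Fᴴ).trace).re + ((O z * F' * ρ z * (F - F')ᴴ).trace).re := by
    simp only [qloss, ← hF, ← hF']
    rw [← Complex.sub_re, ← Complex.add_re, ← Matrix.trace_sub, ← Matrix.trace_add,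
      Matrix.conjTranspose_sub]
    congr 2
    noncomm_ring
  have h1 := abs_re_trace_sandwich_le (A := F - F') (B := F) hO hρ.1 hρ.2
  have h2 := abs_re_trace_sandwich_le (A := F') (B := F - F') hO hρ.1 hρ.2
  have h3 : ‖F‖ ≤ 1 := norm_circuit_le_one hV hU
  have h4 : ‖F'‖ ≤ 1 := norm_circuit_le_one hV hU'
  have h5 : ‖F - F'‖ ≤ _ := norm_circuit_sub_le hV hU hU'
  have h6 : ‖F - F'‖ * ‖F‖ ≤ ‖F - F'‖ := mul_le_of_le_one_right (norm_nonneg _) h3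
  have h7 : ‖F'‖ * ‖F - F'‖ ≤ ‖F - F'‖ := mul_le_of_le_one_left (norm_nonneg _) h4
  rw [hsplit]
  refine (abs_add_le _ _).trans ?_
  have h8 := mul_le_mul_of_nonneg_left (h6.trans h5) hC
  have h9 := mul_le_mul_of_nonneg_left (h7.trans h5) hC
  linarith

theorem measurable_qloss [MeasurableSpace Z] (hO : ∀ p q, Measurable fun z => O z p q)
    (hρ : ∀ p q, Measurable fun z => ρ z p q) (U : ℕ → Matrix (Fin 4) (Fin 4) ℂ) :
    Measurable (qloss V L O ρ U) := by
  unfold qloss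
  simp only [Matrix.trace, Matrix.diag, Matrix.mul_apply]
  fun_prop

end CircuitBounds

section Chaining

open ProbabilityTheory

variable {Z : Type*} [MeasurableSpace Z] {μ : Measure Z} {N : ℕ}

/-- The deviation of the empirical mean of `d` below its expectation. -/
noncomputable def meanGap (μ : Measure Z) (d : Z → ℝ) (S : Fin N → Z) : ℝ :=
  (∫ z, d z ∂μ) - (1 / N) * ∑ i, d (S i)

theorem meanGap_sub {d e : Z → ℝ} (hd : Integrable d μ) (he : Integrable e μ) (S : Fin N → Z) :
    meanGap μ (fun z => d z - e z) S = meanGap μ d S - meanGap μ e S := by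
  simp only [meanGap, integral_sub hd he, Finset.sum_sub_distrib]
  ring

variable [IsProbabilityMeasure μ]

theorem abs_meanGap_le {d : Z → ℝ} {c : ℝ} (hN : 0 < N) (hb : ∀ z, |d z| ≤ c) (S : Fin N → Z) :
    |meanGap μ d S| ≤ 2 * c := by
  have h1 : |∫ z, d z ∂μ| ≤ c := by
    simpa using norm_integral_le_of_norm_le_const (μ := μ) (f := d) (C := c) (.of_forall hb)
  have hN' : (0 : ℝ) < N := by exact_mod_cast hN
  have h2 : |(1 / (N : ℝ)) * ∑ i, d (S i)| ≤ c := by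
    rw [abs_mul, abs_of_pos (by positivity), one_div, inv_mul_le_iff₀ hN']
    refine (Finset.abs_sum_le_sum_abs _ _).trans ?_
    refine (Finset.sum_le_sum fun i _ => hb (S i)).trans ?_
    simp
  exact (abs_sub _ _).trans (by linarith)

/-- Hoeffding's inequality for the empirical mean of a bounded function. -/
theorem measureReal_meanGap_ge_le {d : Z → ℝ} (hd : Measurable d) {c : ℝ}
    (hc : 0 < c) (hb : ∀ z, |d z| ≤ c) (hN : 0 < N) {t : ℝ} (ht : 0 ≤ t) :
    (Measure.pi fun _ : Fin N => μ).real {S | t ≤ meanGap μ d S} ≤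
      Real.exp (-(N * t ^ 2 / (2 * c ^ 2))) := by
  have hN' : (0 : ℝ) < N := by exact_mod_cast hN
  have hX : HasSubgaussianMGF (fun z => -d z - ∫ z, -d z ∂μ) ((‖c - -c‖₊ / 2) ^ 2) μ :=
    hasSubgaussianMGF_of_mem_Icc hd.neg.aemeasurable
      (.of_forall fun z => by have := abs_le.mp (hb z); constructor <;> linarith)
  have hpi (i : Fin N) : HasSubgaussianMGF (fun S : Fin N → Z => -d (S i) - ∫ z, -d z ∂μ)
      ((‖c - -c‖₊ / 2) ^ 2) (Measure.pi fun _ : Fin N => μ) := by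
    refine HasSubgaussianMGF.of_map (X := fun z => -d z - ∫ z, -d z ∂μ)
      (Y := fun S : Fin N → Z => S i)
      (measurable_pi_apply i).aemeasurable ?_
    rwa [(measurePreserving_eval (fun _ : Fin N => μ) i).map_eq]
  have hind : iIndepFun (fun (i : Fin N) (S : Fin N → Z) => -d (S i) - ∫ z, -d z ∂μ)
      (Measure.pi fun _ : Fin N => μ) :=
    iIndepFun_pi (X := fun _ z => -d z - ∫ z, -d z ∂μ)
      fun _ => (hd.neg.sub_const _).aemeasurable
  have h := HasSubgaussianMGF.measure_sum_ge_le_of_iIndepFun hind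
    (s := Finset.univ) (fun i _ => hpi i) (ε := N * t) (by positivity)
  have hset : {S : Fin N → Z | t ≤ meanGap μ d S} =
      {S | N * t ≤ ∑ i, (-d (S i) - ∫ z, -d z ∂μ)} := by
    ext S
    have : ∑ i, (-d (S i) - ∫ z, -d z ∂μ) = N * meanGap μ d S := by
      simp only [integral_neg, Finset.sum_sub_distrib, Finset.sum_neg_distrib, meanGap,
        Finset.sum_const, Finset.card_univ, Fintype.card_fin, nsmul_eq_mul]
      field_simp
      ring
    simp only [Set.mem_ofPred_eq, this]
    exact (mul_le_mul_iff_right₀ hN').symm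
  rw [hset]
  refine h.trans (le_of_eq ?_)
  congr 1
  have : ‖c - -c‖ = 2 * c := by rw [Real.norm_of_nonneg (by linarith)]; ring
  push_cast
  rw [this]
  simp only [Finset.sum_const, Finset.card_univ, Fintype.card_fin, nsmul_eq_mul]
  field_simp

theorem sum_range_succ_mul_half_pow_le (K : ℕ) :
    ∑ k ∈ Finset.range K, ((k : ℝ) + 1) * (1 / 2) ^ k ≤ 4 := by
  have h : ∑ k ∈ Finset.range K, ((k : ℝ) + 1) * (1 / 2) ^ k =
      4 - (2 * K + 4) * (1 / 2) ^ K := by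
    induction K with
    | zero => simp
    | succ K ih => rw [Finset.sum_range_succ, ih]; push_cast; ring
  rw [h]
  have : (0 : ℝ) ≤ (2 * K + 4) * (1 / 2) ^ K := by positivity
  linarith

/-- Telescoping along a chain of approximations with controlled increments. -/
theorem meanGap_le_of_chain {C D : ℝ} (hC : 0 < C) (hN : 0 < N) {f : Z → ℝ} (hf : Measurable f)
    {p : ℕ → Z → ℝ} (hp0 : p 0 = 0) (hpm : ∀ k, Measurable (p k)) (hpb : ∀ k z, |p k z| ≤ C)
    (hfp : ∀ k z, |f z - p k z| ≤ C * (1 / 2) ^ k) {S : Fin N → Z}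
    (hinc : ∀ k, meanGap μ (fun z => p (k + 1) z - p k z) S ≤
      2 * C * (1 / 2) ^ k * (((k : ℝ) + 1) * D)) (hD : 0 ≤ D) :
    meanGap μ f S ≤ 8 * C * D := by
  have hpi (k : ℕ) : Integrable (p k) μ :=
    .of_bound (hpm k).aestronglyMeasurable C (.of_forall (hpb k))
  have hfi : Integrable f μ := by
    refine .of_bound hf.aestronglyMeasurable C (.of_forall fun z => ?_)
    simpa [hp0] using hfp 0 z
  have htel (K : ℕ) : meanGap μ (p K) S ≤
      2 * C * D * ∑ k ∈ Finset.range K, ((k : ℝ) + 1) * (1 / 2) ^ k := by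
    induction K with
    | zero => simp [meanGap, hp0]
    | succ K ih =>
      have h := hinc K
      rw [meanGap_sub (hpi _) (hpi _)] at h
      rw [Finset.sum_range_succ, mul_add]
      linarith
  have hK (K : ℕ) : meanGap μ f S ≤ 8 * C * D + 2 * C * (1 / 2) ^ K := by
    have h1 := (abs_le.mp (abs_meanGap_le (μ := μ) hN (hfp K) S)).2
    rw [meanGap_sub hfi (hpi K)] at h1
    have h2 := mul_le_mul_of_nonneg_left (sum_range_succ_mul_half_pow_le K)
      (by positivity : 0 ≤ 2 * C * D)
    linarith [htel K]
  have hlim : Filter.Tendsto (fun K : ℕ => 8 * C * D + 2 * C * (1 / 2 : ℝ) ^ K) Filter.atTop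
      (nhds (8 * C * D + 2 * C * 0)) :=
    ((tendsto_pow_atTop_nhds_zero_of_lt_one (by norm_num) (by norm_num)).const_mul _).const_add _
  rw [mul_zero, add_zero] at hlim
  exact ge_of_tendsto' hlim hK

/-- The failure probability of one chaining level after a union bound over pairs of net points. -/
theorem chaining_level_bound {E δ : ℝ} (hE : 0 ≤ E) (hδ : 0 < δ) (hδ1 : δ < 1) (k : ℕ) :
    Real.exp (E * (k + 1)) * Real.exp (E * ((k + 1 : ℕ) + 1)) *
      Real.exp (-((k + 1) ^ 2 * (3 * E + 1 + Real.log (2 / δ)))) ≤ δ / 2 * (1 / 2) ^ k := by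
  have hlog : 0 ≤ Real.log (2 / δ) := Real.log_nonneg (by rw [le_div_iff₀ hδ]; linarith)
  have hk : (0 : ℝ) ≤ k := k.cast_nonneg
  have h1 : Real.exp (-Real.log (2 / δ)) = δ / 2 := by
    rw [Real.exp_neg, Real.exp_log (by positivity), inv_div]
  have h2 : Real.exp (-(k : ℝ)) ≤ (1 / 2) ^ k := by
    rw [← mul_neg_one, mul_comm, Real.exp_mul, Real.rpow_natCast]
    gcongr
    rw [Real.exp_neg, one_div]
    gcongr
    linarith [Real.add_one_le_exp 1]
  rw [← Real.exp_add, ← Real.exp_add]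
  refine le_trans (Real.exp_le_exp.mpr (?_ : _ ≤ -Real.log (2 / δ) + -(k : ℝ))) ?_
  · push_cast
    nlinarith [mul_nonneg hk hE, mul_nonneg hk hlog, mul_nonneg (mul_nonneg hk hk) hE,
      mul_nonneg (mul_nonneg hk hk) hlog]
  · rw [Real.exp_add, h1]
    gcongr

/-- Uniform deviation bound by chaining: a class of functions with finite sup-norm nets of
exponentially controlled size at all dyadic scales. -/
theorem chaining_uniform_deviation {𝓕 : Set (Z → ℝ)} {C E δ : ℝ} (hC : 0 < C) (hE : 0 ≤ E)
    (hδ : 0 < δ) (hδ1 : δ < 1) (hN : 0 < N) {G : ℕ → Finset (Z → ℝ)} (hG0 : G 0 = {0})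
    (hGm : ∀ k, ∀ h ∈ G k, Measurable h) (hGb : ∀ k, ∀ h ∈ G k, ∀ z, |h z| ≤ C)
    (hGcard : ∀ k : ℕ, ((G k).card : ℝ) ≤ Real.exp (E * (k + 1)))
    (hFm : ∀ f ∈ 𝓕, Measurable f)
    (hcov : ∀ f ∈ 𝓕, ∀ k, ∃ h ∈ G k, ∀ z, |f z - h z| ≤ C * (1 / 2) ^ k) :
    ENNReal.ofReal (1 - δ) ≤ (Measure.pi fun _ : Fin N => μ) {S | ∀ f ∈ 𝓕,
      meanGap μ f S ≤ 8 * C * √(2 * (3 * E + 1 + Real.log (2 / δ)) / N)} := by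
  classical
  set D := √(2 * (3 * E + 1 + Real.log (2 / δ)) / N)
  set P := Measure.pi fun _ : Fin N => μ
  have hN' : (0 : ℝ) < N := by exact_mod_cast hN
  have hlog : 0 ≤ Real.log (2 / δ) := Real.log_nonneg (by rw [le_div_iff₀ hδ]; linarith)
  let r : ℕ → ℝ := fun k => 2 * C * (1 / 2) ^ k * (((k : ℝ) + 1) * D)
  let pairs : ℕ → Finset ((Z → ℝ) × (Z → ℝ)) := fun k =>
    (G k ×ˢ G (k + 1)).filter fun q => ∀ z, |q.2 z - q.1 z| ≤ 2 * C * (1 / 2) ^ k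
  let bad : ℕ → (Z → ℝ) × (Z → ℝ) → Set (Fin N → Z) := fun k q =>
    {S | r k ≤ meanGap μ (fun z => q.2 z - q.1 z) S}
  have hbad (k : ℕ) : P (⋃ q ∈ pairs k, bad k q) ≤ ENNReal.ofReal (δ / 2 * (1 / 2) ^ k) := by
    have hone : ∀ q ∈ pairs k, P (bad k q) ≤
        ENNReal.ofReal (Real.exp (-((k + 1) ^ 2 * (3 * E + 1 + Real.log (2 / δ))))) := by
      intro q hq
      obtain ⟨hq1, hq2⟩ := Finset.mem_filter.mp hq
      obtain ⟨hqa, hqb⟩ := Finset.mem_product.mp hq1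
      have h := measureReal_meanGap_ge_le (μ := μ) ((hGm _ _ hqb).sub (hGm _ _ hqa))
        (by positivity : 0 < 2 * C * (1 / 2) ^ k) hq2 hN (by positivity : 0 ≤ r k)
      have hexp : N * r k ^ 2 / (2 * (2 * C * (1 / 2) ^ k) ^ 2) =
          (k + 1) ^ 2 * (3 * E + 1 + Real.log (2 / δ)) := by
        have hD2 : D ^ 2 = 2 * (3 * E + 1 + Real.log (2 / δ)) / N := Real.sq_sqrt (by positivity)
        simp only [r, mul_pow, hD2]
        field_simp
      rw [hexp] at h
      exact (ENNReal.le_ofReal_iff_toReal_le (measure_ne_top _ _) (Real.exp_nonneg _)).mpr h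
    refine (measure_biUnion_finset_le _ _).trans ?_
    refine (Finset.sum_le_card_nsmul _ _ _ hone).trans ?_
    rw [nsmul_eq_mul, ← ENNReal.ofReal_natCast, ← ENNReal.ofReal_mul (Nat.cast_nonneg _)]
    refine ENNReal.ofReal_le_ofReal (le_trans ?_ (chaining_level_bound hE hδ hδ1 k))
    gcongr
    calc ((pairs k).card : ℝ) ≤ (G k).card * (G (k + 1)).card := by
          exact_mod_cast (Finset.card_filter_le _ _).trans (Finset.card_product _ _).le
      _ ≤ _ := by gcongr <;> exact hGcard _
  have hunion : P (⋃ k, ⋃ q ∈ pairs k, bad k q) ≤ ENNReal.ofReal δ := by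
    refine (measure_iUnion_le _).trans ((ENNReal.tsum_le_tsum hbad).trans (le_of_eq ?_))
    have hs : HasSum (fun k : ℕ => δ / 2 * (1 / 2 : ℝ) ^ k) (δ / 2 * 2) :=
      hasSum_geometric_two.mul_left _
    rw [← ENNReal.ofReal_tsum_of_nonneg (fun k => by positivity) hs.summable, hs.tsum_eq]
    congr 1
    ring
  rw [ENNReal.ofReal_sub _ hδ.le, ENNReal.ofReal_one, tsub_le_iff_right]
  refine le_trans ?_ (add_le_add_right hunion _)
  rw [← measure_univ (μ := P)]
  refine (measure_mono fun S _ => ?_).trans (measure_union_le _ _)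
  rw [Set.mem_union, or_iff_not_imp_right]
  intro hS f hf
  choose p hpG hp using hcov f hf
  refine meanGap_le_of_chain hC hN (hFm f hf) (p := p) ?_ (fun k => hGm k _ (hpG k))
    (fun k => hGb k _ (hpG k)) hp (fun k => ?_) (Real.sqrt_nonneg _)
  · simpa [hG0] using hpG 0
  · by_contra hlt
    refine hS (Set.mem_iUnion.mpr ⟨k, Set.mem_iUnion₂.mpr ⟨(p k, p (k + 1)), ?_, ?_⟩⟩)
    · refine Finset.mem_filter.mpr ⟨Finset.mem_product.mpr ⟨hpG k, hpG (k + 1)⟩, fun z => ?_⟩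
      have h1 := hp k z
      have h2 := hp (k + 1) z
      have h3 : C * (1 / 2) ^ (k + 1) ≤ C * (1 / 2) ^ k := by
        rw [pow_succ]; nlinarith [mul_pos hC (by positivity : (0 : ℝ) < (1 / 2) ^ k)]
      calc |p (k + 1) z - p k z| = |(f z - p k z) - (f z - p (k + 1) z)| := by ring_nf
        _ ≤ |f z - p k z| + |f z - p (k + 1) z| := abs_sub _ _
        _ ≤ 2 * C * (1 / 2) ^ k := by linarith
    · exact (not_le.mp hlt).le

end Chaining

section Nets

open scoped Matrix.Norms.L2Operator

theorem floor_mul_mem_Icc {x : ℝ} (hx : |x| ≤ 1) (n : ℕ) :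
    ⌊n * x⌋ ∈ Finset.Icc (-(n : ℤ)) n := by
  have hn : (0 : ℝ) ≤ n := n.cast_nonneg
  obtain ⟨h1, h2⟩ := abs_le.mp hx
  rw [Finset.mem_Icc, Int.le_floor]
  refine ⟨by push_cast; nlinarith, ?_⟩
  have h3 : (⌊n * x⌋ : ℝ) ≤ n := (Int.floor_le _).trans (by nlinarith)
  exact_mod_cast h3

theorem abs_sub_le_of_floor_mul_eq {x y : ℝ} {n : ℕ} (hn : 0 < n) (h : ⌊n * x⌋ = ⌊n * y⌋) :
    |x - y| ≤ 1 / n := by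
  have hn' : (0 : ℝ) < n := by exact_mod_cast hn
  have h1 := Int.abs_sub_lt_one_of_floor_eq_floor h
  rw [← mul_sub, abs_mul, abs_of_pos hn'] at h1
  rw [le_div_iff₀ hn']
  linarith

/-- A finite internal net of a product of unitary groups, with its own resolution in each
factor. -/
theorem exists_finite_net_unitary {T : ℕ} (n : ℕ → ℕ) (hn : ∀ t < T, 0 < n t) :
    ∃ P : Finset (ℕ → Matrix (Fin 4) (Fin 4) ℂ),
      (∀ U ∈ P, ∀ t < T, U t ∈ Matrix.unitaryGroup (Fin 4) ℂ) ∧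
      P.card ≤ ∏ t ∈ Finset.range T, (2 * n t + 1) ^ 32 ∧
      ∀ U : ℕ → Matrix (Fin 4) (Fin 4) ℂ, (∀ t < T, U t ∈ Matrix.unitaryGroup (Fin 4) ℂ) →
        ∃ U' ∈ P, ∀ t < T, ‖U t - U' t‖ ≤ 32 / n t := by
  classical
  let W : Set (ℕ → Matrix (Fin 4) (Fin 4) ℂ) :=
    {U | ∀ t < T, U t ∈ Matrix.unitaryGroup (Fin 4) ℂ}
  let key : (ℕ → Matrix (Fin 4) (Fin 4) ℂ) → Fin T → Fin 4 → Fin 4 → ℤ × ℤ := fun U t i j =>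
    (⌊n t * (U t i j).re⌋, ⌊n t * (U t i j).im⌋)
  let K : Finset (Fin T → Fin 4 → Fin 4 → ℤ × ℤ) :=
    Fintype.piFinset fun t => Fintype.piFinset fun _ => Fintype.piFinset fun _ =>
      Finset.Icc (-(n t : ℤ)) (n t) ×ˢ Finset.Icc (-(n t : ℤ)) (n t)
  have hK : K.card = ∏ t ∈ Finset.range T, (2 * n t + 1) ^ 32 := by
    have h (t : ℕ) : ((n t : ℤ) + 1 + n t).toNat = 2 * n t + 1 := by lia
    simp only [K, Fintype.card_piFinset, Finset.card_product, Int.card_Icc, sub_neg_eq_add, h,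
      Finset.prod_const, Finset.card_univ, Fintype.card_fin]
    rw [Fin.prod_univ_eq_prod_range
      (fun t => (((2 * n t + 1) * (2 * n t + 1)) ^ 4) ^ 4) T]
    exact Finset.prod_congr rfl fun t _ => by ring
  have hsub : key '' W ⊆ K := by
    rintro _ ⟨U, hU, rfl⟩
    simp only [K, Finset.mem_coe, Fintype.mem_piFinset, Finset.mem_product]
    intro t i j
    have h := entry_norm_bound_of_unitary (hU t t.2) i j
    exact ⟨floor_mul_mem_Icc ((Complex.abs_re_le_norm _).trans h) _,
      floor_mul_mem_Icc ((Complex.abs_im_le_norm _).trans h) _⟩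
  obtain ⟨P, hPW, hP⟩ := Set.exists_subset_bijOn W key
  have hPfin : P.Finite := hP.finite_iff_finite.mpr (K.finite_toSet.subset hsub)
  refine ⟨hPfin.toFinset, fun U hU => hPW (hPfin.mem_toFinset.mp hU), ?_, fun U hU => ?_⟩
  · rw [← hK]
    exact Finset.card_le_card_of_injOn key
      (fun U hU => hsub (hP.mapsTo (hPfin.mem_toFinset.mp hU)))
      (by simpa using hP.injOn)
  · obtain ⟨U', hU', hkey⟩ := hP.surjOn (Set.mem_image_of_mem key hU)
    refine ⟨U', hPfin.mem_toFinset.mpr hU', fun t ht => ?_⟩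
    have hentry (i j : Fin 4) : ‖(U t - U' t) i j‖ ≤ 2 / n t := by
      have h := congrFun (congrFun (congrFun hkey ⟨t, ht⟩) i) j
      have h1 := abs_sub_le_of_floor_mul_eq (hn t ht) (congrArg Prod.fst h).symm
      have h2 := abs_sub_le_of_floor_mul_eq (hn t ht) (congrArg Prod.snd h).symm
      refine (Complex.norm_le_abs_re_add_abs_im _).trans ?_
      rw [Matrix.sub_apply, Complex.sub_re, Complex.sub_im]
      refine (add_le_add h1 h2).trans (le_of_eq (by ring))
    refine (norm_le_sum_norm_entries _).trans ?_
    refine (Finset.sum_le_sum fun i _ => Finset.sum_le_sum fun j _ => hentry i j).trans ?_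
    simp only [Finset.sum_const, Finset.card_univ, Fintype.card_fin, nsmul_eq_mul]
    exact le_of_eq (by push_cast; ring)

theorem sum_comp_le_sum_mul {T L : ℕ} {g M : ℕ → ℕ} (hg : ∀ s < L, g s < T)
    (hM : ∀ t < T, ((Finset.range L).filter fun s => g s = t).card ≤ M t) {x : ℕ → ℝ}
    (hx : ∀ t, 0 ≤ x t) :
    ∑ s ∈ Finset.range L, x (g s) ≤ ∑ t ∈ Finset.range T, M t * x t := by
  rw [← Finset.sum_fiberwise_of_maps_to (s := Finset.range L) (t := Finset.range T) (g := g)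
    fun s hs => Finset.mem_range.mpr (hg s (Finset.mem_range.mp hs))]
  refine Finset.sum_le_sum fun t ht => ?_
  rw [Finset.sum_congr rfl fun s hs => congrArg x (Finset.mem_filter.mp hs).2, Finset.sum_const,
    nsmul_eq_mul]
  exact mul_le_mul_of_nonneg_right (by exact_mod_cast hM t (Finset.mem_range.mp ht)) (hx t)

/-- The cardinality of the dyadic nets, in exponential form. -/
theorem prod_net_card_le_exp {T : ℕ} (hT : 0 < T) {M : ℕ → ℕ} (hM : ∀ t < T, 0 < M t) (k : ℕ) :
    ((∏ t ∈ Finset.range T, (2 * (64 * T * M t * 2 ^ k) + 1) ^ 32 : ℕ) : ℝ) ≤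
      Real.exp (256 * (T * (1 + Real.log T) + ∑ t ∈ Finset.range T, Real.log (M t)) *
        (k + 1)) := by
  have hT' : (1 : ℝ) ≤ T := by exact_mod_cast hT
  have hk : (0 : ℝ) ≤ k := k.cast_nonneg
  have hlogT : 0 ≤ Real.log T := Real.log_nonneg hT'
  have hexp : 256 * (T * (1 + Real.log T) + ∑ t ∈ Finset.range T, Real.log (M t)) * (k + 1) =
      ∑ t ∈ Finset.range T, 256 * (1 + Real.log T + Real.log (M t)) * (k + 1) := by
    rw [← Finset.sum_mul, ← Finset.mul_sum, Finset.sum_add_distrib]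
    simp only [Finset.sum_const, Finset.card_range, nsmul_eq_mul]
  rw [hexp, Real.exp_sum, Nat.cast_prod]
  refine Finset.prod_le_prod (fun _ _ => by positivity) fun t ht => ?_
  have hMt : (1 : ℝ) ≤ M t := by exact_mod_cast hM t (Finset.mem_range.mp ht)
  have hlogM : 0 ≤ Real.log (M t) := Real.log_nonneg hMt
  have h2 : (2 : ℝ) ^ (8 + k) ≤ Real.exp (8 + k) := by
    have h := Real.add_one_le_exp 1
    calc (2 : ℝ) ^ (8 + k) ≤ Real.exp 1 ^ (8 + k) := by gcongr; linarith
      _ = Real.exp (8 + k) := by rw [← Real.exp_nat_mul]; push_cast; ring_nf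
  have hbase : (2 * (64 * T * M t * 2 ^ k) + 1 : ℝ) ≤
      Real.exp (8 + k + Real.log T + Real.log (M t)) := by
    rw [Real.exp_add, Real.exp_add, Real.exp_log (by linarith), Real.exp_log (by linarith)]
    have h1 : (1 : ℝ) ≤ T * M t * 2 ^ k :=
      one_le_mul_of_one_le_of_one_le (one_le_mul_of_one_le_of_one_le hT' hMt)
        (one_le_pow₀ (by norm_num))
    calc (2 * (64 * T * M t * 2 ^ k) + 1 : ℝ) ≤ 2 ^ (8 + k) * T * M t := by
          rw [pow_add]; nlinarith
      _ ≤ _ := by gcongr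
  push_cast
  refine (pow_le_pow_left₀ (by positivity) hbase 32).trans ?_
  rw [← Real.exp_nat_mul]
  refine Real.exp_le_exp.mpr ?_
  push_cast
  nlinarith [mul_nonneg hk hlogT, mul_nonneg hk hlogM]

end Nets

theorem sqrt_add_three_le {a b c : ℝ} (ha : 0 ≤ a) (hb : 0 ≤ b) (hc : 0 ≤ c) :
    √(a + b + c) ≤ √a + √b + √c := by
  refine Real.sqrt_le_iff.mpr ⟨by positivity, ?_⟩
  nlinarith [Real.sq_sqrt ha, Real.sq_sqrt hb, Real.sq_sqrt hc,
    mul_nonneg (Real.sqrt_nonneg a) (Real.sqrt_nonneg b),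
    mul_nonneg (Real.sqrt_nonneg a) (Real.sqrt_nonneg c),
    mul_nonneg (Real.sqrt_nonneg b) (Real.sqrt_nonneg c)]

/-- Generalization bound for a gate-sharing QMLM: `T` independently parameterized 2-qubit gates,
gate `t` reused at most `M t` times across `L` layers (layer `s` applies gate `g s`). -/
theorem gate_sharing_qmlm_generalization :
    ∃ c : ℝ, 0 < c ∧
      ∀ (m T L N : ℕ), 0 < m → 0 < T → 0 < L → 0 < N →
      ∀ g : ℕ → ℕ, (∀ s < L, g s < T) →
      ∀ M : ℕ → ℕ, (∀ t < T, 0 < M t) →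
        (∀ t < T, ((Finset.range L).filter fun s => g s = t).card ≤ M t) →
      ∀ V : ℕ → Matrix (Fin 4 × Fin m) (Fin 4 × Fin m) ℂ,
        (∀ s ≤ L, V s ∈ Matrix.unitaryGroup (Fin 4 × Fin m) ℂ) →
      ∀ (Z : Type) (_ : MeasurableSpace Z) (μ : Measure Z), IsProbabilityMeasure μ →
      ∀ ρ : Z → Matrix (Fin 4 × Fin m) (Fin 4 × Fin m) ℂ,
        (∀ p q, Measurable fun z => ρ z p q) →
        (∀ z, (ρ z).PosSemidef ∧ (ρ z).trace = 1) →
      ∀ C : ℝ, 0 < C →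
      ∀ O : Z → Matrix (Fin 4 × Fin m) (Fin 4 × Fin m) ℂ,
        (∀ p q, Measurable fun z => O z p q) →
        (∀ z, (O z).IsHermitian ∧ opNorm (O z) ≤ C) →
      ∀ δ : ℝ, 0 < δ → δ < 1 →
        ENNReal.ofReal (1 - δ) ≤
          (Measure.pi fun _ : Fin N => μ) {S | ∀ U : ℕ → Matrix (Fin 4) (Fin 4) ℂ,
            (∀ t < T, U t ∈ Matrix.unitaryGroup (Fin 4) ℂ) →
            (∫ z, qloss V L O ρ (fun s => U (g s)) z ∂μ)
                - (1 / N) * ∑ i, qloss V L O ρ (fun s => U (g s)) (S i)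
              ≤ c * C * (Real.sqrt (T * (1 + Real.log T) / N)
                  + Real.sqrt ((∑ t ∈ Finset.range T, Real.log (M t)) / N)
                  + Real.sqrt (Real.log (2 / δ) / N))} := by
  classical
  refine ⟨320, by norm_num, ?_⟩
  intro m T L N _ hT _ hN g hg M hM0 hM V hV Z _ μ _ ρ hρm hρ C hC O hOm hO δ hδ hδ1
  have hlayer {U : ℕ → Matrix (Fin 4) (Fin 4) ℂ}
      (hU : ∀ t < T, U t ∈ Matrix.unitaryGroup (Fin 4) ℂ) :
      ∀ s < L, U (g s) ∈ Matrix.unitaryGroup (Fin 4) ℂ := fun s hs => hU _ (hg s hs)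
  let loss : (ℕ → Matrix (Fin 4) (Fin 4) ℂ) → Z → ℝ := fun U =>
    qloss V L O ρ fun s => U (g s)
  choose P hPU hPcard hPnet using fun k : ℕ => exists_finite_net_unitary (T := T)
    (fun t => 64 * T * M t * 2 ^ k) fun t ht => by have := hM0 t ht; positivity
  let G : ℕ → Finset (Z → ℝ) := fun k => if k = 0 then {0} else (P k).image loss
  have hG {k : ℕ} {h : Z → ℝ} (hh : h ∈ G k) :
      h = 0 ∨ ∃ U, (∀ t < T, U t ∈ Matrix.unitaryGroup (Fin 4) ℂ) ∧ loss U = h := by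
    by_cases hk : k = 0
    · left; simpa [G, hk] using hh
    · right
      simp only [G, if_neg hk] at hh
      obtain ⟨U, hU, rfl⟩ := Finset.mem_image.mp hh
      exact ⟨U, hPU k U hU, rfl⟩
  set W := T * (1 + Real.log T) + ∑ t ∈ Finset.range T, Real.log (M t) with hW
  have hT' : (1 : ℝ) ≤ T := by exact_mod_cast hT
  have hN' : (0 : ℝ) < N := by exact_mod_cast hN
  have hlogT : 0 ≤ Real.log T := Real.log_nonneg hT'
  have hA : (1 : ℝ) ≤ T * (1 + Real.log T) := by nlinarith
  have hB : 0 ≤ ∑ t ∈ Finset.range T, Real.log (M t) :=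
    Finset.sum_nonneg fun t _ => Real.log_natCast_nonneg _
  have hδlog : 0 ≤ Real.log (2 / δ) := Real.log_nonneg (by rw [le_div_iff₀ hδ]; linarith)
  have hGm : ∀ k, ∀ h ∈ G k, Measurable h := by
    intro k h hh
    obtain rfl | ⟨U, -, rfl⟩ := hG hh
    exacts [measurable_zero, measurable_qloss hOm hρm _]
  have hGb : ∀ k, ∀ h ∈ G k, ∀ z, |h z| ≤ C := by
    intro k h hh z
    obtain rfl | ⟨U, hU, rfl⟩ := hG hh
    exacts [by simpa using hC.le, abs_qloss_le hV (hlayer hU) hC.le (hO z).2 (hρ z)]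
  have hGcard : ∀ k : ℕ, ((G k).card : ℝ) ≤ Real.exp (256 * W * (k + 1)) := by
    intro k
    by_cases hk : k = 0
    · simp only [G, if_pos hk, Finset.card_singleton, Nat.cast_one]
      exact Real.one_le_exp (by positivity)
    · simp only [G, if_neg hk]
      refine le_trans ?_ (prod_net_card_le_exp hT hM0 k)
      exact_mod_cast Finset.card_image_le.trans (hPcard k)
  have hcov : ∀ f ∈ loss '' {U | ∀ t < T, U t ∈ Matrix.unitaryGroup (Fin 4) ℂ}, ∀ k,
      ∃ h ∈ G k, ∀ z, |f z - h z| ≤ C * (1 / 2) ^ k := by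
    rintro _ ⟨U, hU, rfl⟩ k
    by_cases hk : k = 0
    · refine ⟨0, by simp [G, hk], fun z => ?_⟩
      simpa [hk] using abs_qloss_le hV (hlayer hU) hC.le (hO z).2 (hρ z)
    · obtain ⟨U', hU', hnear⟩ := hPnet k U hU
      refine ⟨loss U', by simpa only [G, if_neg hk] using Finset.mem_image_of_mem loss hU',
        fun z => ?_⟩
      refine (abs_qloss_sub_le hV (hlayer hU) (hlayer (hPU k U' hU')) hC.le (hO z).2
        (hρ z)).trans ?_
      have hsum := (sum_comp_le_sum_mul hg hM (x := fun t => opNorm (U t - U' t))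
        fun t => norm_nonneg _).trans (Finset.sum_le_sum fun t ht =>
          mul_le_mul_of_nonneg_left (hnear t (Finset.mem_range.mp ht)) (Nat.cast_nonneg (M t)))
      have hval : ∑ t ∈ Finset.range T, (M t : ℝ) * (32 / (64 * T * M t * 2 ^ k : ℕ)) =
          1 / 2 * (1 / 2) ^ k := by
        rw [Finset.sum_congr rfl (g := fun _ => 1 / (2 * T) * (1 / 2 : ℝ) ^ k)]
        · simp only [Finset.sum_const, Finset.card_range, nsmul_eq_mul]
          field_simp
        · intro t ht
          have hMt : (M t : ℝ) ≠ 0 := by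
            exact_mod_cast (hM0 t (Finset.mem_range.mp ht)).ne'
          push_cast
          rw [_root_.one_div_pow]
          field_simp
          norm_num
      rw [hval] at hsum
      have := mul_le_mul_of_nonneg_left hsum (by positivity : 0 ≤ 2 * C)
      exact this.trans (le_of_eq (by ring))
  have hFm : ∀ f ∈ loss '' {U | ∀ t < T, U t ∈ Matrix.unitaryGroup (Fin 4) ℂ},
      Measurable f := by
    rintro _ ⟨U, -, rfl⟩
    exact measurable_qloss hOm hρm _
  refine (chaining_uniform_deviation (μ := μ) hC (by positivity) hδ hδ1 hN (by simp [G])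
    hGm hGb hGcard hFm hcov).trans (measure_mono fun S hS U hU => ?_)
  refine (hS (loss U) ⟨U, hU, rfl⟩).trans ?_
  have hsqrt : √(2 * (3 * (256 * W) + 1 + Real.log (2 / δ)) / N) ≤
      40 * (√(T * (1 + Real.log T) / N) + √((∑ t ∈ Finset.range T, Real.log (M t)) / N) +
        √(Real.log (2 / δ) / N)) := by
    calc √(2 * (3 * (256 * W) + 1 + Real.log (2 / δ)) / N)
        ≤ √(40 ^ 2 * (T * (1 + Real.log T) / N +
            (∑ t ∈ Finset.range T, Real.log (M t)) / N + Real.log (2 / δ) / N)) := by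
          refine Real.sqrt_le_sqrt ?_
          rw [← add_div, ← add_div, ← mul_div_assoc]
          refine div_le_div_of_nonneg_right ?_ hN'.le
          linarith
      _ = 40 * √(T * (1 + Real.log T) / N +
            (∑ t ∈ Finset.range T, Real.log (M t)) / N + Real.log (2 / δ) / N) := by
          rw [Real.sqrt_mul (by norm_num), Real.sqrt_sq (by norm_num)]
      _ ≤ _ := by
          gcongr
          exact sqrt_add_three_le (by positivity) (by positivity) (by positivity)
  have := mul_le_mul_of_nonneg_left hsqrt (by positivity : 0 ≤ 8 * C)
  exact this.trans (le_of_eq (by ring))
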